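/- Let ε ∈ (0, 1/30], let G = (V, E, w) be a weighted graph with positive edge weights, and let S ⊆ V be a fixed subset whose cut weight satisfies 1 ≤ w(S,S̄) ≤ 4. Independently for each edge e ∈ E, keep e with probability p_e = min{w(e)/ε², 1}, and assign kept edges the rescaled weight w̃(e) = w(e)/p_e (non-kept edges get w̃(e) = 0); let w̃(S,S̄) = Σ over crossing edges e of w̃(e). Then with probability at least 8/9, |w̃(S,S̄) − w(S,S̄)| ≤ 3·ε·w(S,S̄). -/

import Mathlib

open scoped Classical

/-- Weight of the cut `(S, S̄)`. -/
noncomputable def cutW {n : ℕ} (w : Fin n → Fin n → ℝ) (S : Finset (Fin n)) : ℝ :=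
  ∑ p ∈ Finset.univ.filter (fun p : Fin n × Fin n => p.1 ∈ S ∧ p.2 ∉ S), w p.1 p.2

/-- The sampling probability `p_e = min {w(e)/ε², 1}` of an edge. -/
noncomputable def keepProb {n : ℕ} (w : Fin n → Fin n → ℝ) (ε : ℝ)
    (p : Fin n × Fin n) : ℝ :=
  min (w p.1 p.2 / ε ^ 2) 1

/-- Whether the (undirected) edge `{u, v}` is kept, looked up at its canonical
representative with increasing endpoints. -/
noncomputable def keep {n : ℕ} (ω : {p : Fin n × Fin n // p.1 < p.2} → Bool)
    (u v : Fin n) : Bool :=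
  if h : u < v then ω ⟨(u, v), h⟩ else if h' : v < u then ω ⟨(v, u), h'⟩ else false

/-- Probability of the keep-outcome `ω`: edges are kept independently, edge `e`
with probability `keepProb w ε e`. -/
noncomputable def sampleProb {n : ℕ} (w : Fin n → Fin n → ℝ) (ε : ℝ)
    (ω : {p : Fin n × Fin n // p.1 < p.2} → Bool) : ℝ :=
  ∏ e : {p : Fin n × Fin n // p.1 < p.2},
    (if ω e then keepProb w ε e.1 else 1 - keepProb w ε e.1)

/-- The rescaled cut weight `w̃(S, S̄)`: each kept crossing edge contributes
`w(e)/p_e`, non-kept edges contribute `0`. -/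
noncomputable def wTilde {n : ℕ} (w : Fin n → Fin n → ℝ) (ε : ℝ)
    (ω : {p : Fin n × Fin n // p.1 < p.2} → Bool) (S : Finset (Fin n)) : ℝ :=
  ∑ p ∈ Finset.univ.filter (fun p : Fin n × Fin n => p.1 ∈ S ∧ p.2 ∉ S),
    (if keep ω p.1 p.2 then w p.1 p.2 / keepProb w ε p else 0)

section Helpers
variable {ι : Type*} [Fintype ι] [DecidableEq ι]

/-- Weight of a Boolean outcome under product Bernoulli. -/
noncomputable def bern (q : ι → ℝ) (ω : ι → Bool) : ℝ :=
  ∏ e, (if ω e then q e else 1 - q e)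

lemma sum_prod_bool (g : ι → Bool → ℝ) :
    ∑ ω : ι → Bool, ∏ e, g e (ω e) = ∏ e, (g e true + g e false) := by
  have h := Finset.prod_univ_sum (fun _ : ι => (Finset.univ : Finset Bool)) g
  rw [Fintype.piFinset_univ] at h
  rw [← h]
  simp

lemma bern_total (q : ι → ℝ) : ∑ ω : ι → Bool, bern q ω = 1 := by
  unfold bern
  rw [sum_prod_bool (fun e b => if b then q e else 1 - q e)]
  simp

lemma bern_one (q : ι → ℝ) (e : ι) (h : Bool → ℝ) :
    ∑ ω : ι → Bool, bern q ω * h (ω e) = q e * h true + (1 - q e) * h false := by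
  have : ∀ ω : ι → Bool, bern q ω * h (ω e) =
      ∏ i, ((if ω i then q i else 1 - q i) * (if i = e then h (ω i) else 1)) := by
    intro ω
    rw [Finset.prod_mul_distrib, Finset.prod_ite_eq' Finset.univ e (fun i => h (ω i))]
    simp [bern]
  simp_rw [this]
  rw [sum_prod_bool (fun i b => (if b then q i else 1 - q i) * (if i = e then h b else 1))]
  rw [Finset.prod_eq_single e]
  · simp
  · intro b _ hb
    simp [hb]
  · simp

lemma bern_two (q : ι → ℝ) (e f : ι) (hef : e ≠ f) (h k : Bool → ℝ)
    (h0 : q e * h true + (1 - q e) * h false = 0) :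
    ∑ ω : ι → Bool, bern q ω * (h (ω e) * k (ω f)) = 0 := by
  have : ∀ ω : ι → Bool, bern q ω * (h (ω e) * k (ω f)) =
      ∏ i, ((if ω i then q i else 1 - q i) *
        ((if i = e then h (ω i) else 1) * (if i = f then k (ω i) else 1))) := by
    intro ω
    rw [Finset.prod_mul_distrib, Finset.prod_mul_distrib,
      Finset.prod_ite_eq' Finset.univ e (fun i => h (ω i)),
      Finset.prod_ite_eq' Finset.univ f (fun i => k (ω i))]
    simp [bern]
  simp_rw [this]
  rw [sum_prod_bool (fun i b => (if b then q i else 1 - q i) *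
    ((if i = e then h b else 1) * (if i = f then k b else 1)))]
  apply Finset.prod_eq_zero (Finset.mem_univ e)
  simpa [hef] using h0

lemma bern_var (q a : ι → ℝ) :
    ∑ ω : ι → Bool, bern q ω * (∑ e, a e * ((if ω e then 1 else 0) - q e)) ^ 2
      = ∑ e, a e ^ 2 * (q e * (1 - q e)) := by
  simp_rw [sq (∑ e, _), Finset.sum_mul_sum, Finset.mul_sum]
  rw [Finset.sum_comm]
  refine Finset.sum_congr rfl fun e _ => ?_
  rw [Finset.sum_comm, Finset.sum_eq_single e]
  · have := bern_one q e (fun b => (a e * ((if b then 1 else 0) - q e)) *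
      (a e * ((if b then 1 else 0) - q e)))
    simp only at this
    rw [this]
    simp
    ring
  · intro f _ hf
    apply bern_two q e f hf.symm (fun b => (a e * ((if b then 1 else 0) - q e)))
      (fun b => (a f * ((if b then 1 else 0) - q f)))
    simp
    ring
  · simp

lemma bern_nonneg (q : ι → ℝ) (h0 : ∀ e, 0 ≤ q e) (h1 : ∀ e, q e ≤ 1) (ω : ι → Bool) :
    0 ≤ bern q ω := by
  refine Finset.prod_nonneg fun e _ => ?_
  split_ifs
  · exact h0 e
  · linarith [h1 e]

lemma bern_cheb (q a : ι → ℝ) (h0 : ∀ e, 0 ≤ q e) (h1 : ∀ e, q e ≤ 1) (t : ℝ) (ht : 0 < t)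
    (D : (ι → Bool) → ℝ) (hD : ∀ ω, D ω = ∑ e, a e * ((if ω e then 1 else 0) - q e))
    (hv : ∑ e, a e ^ 2 * (q e * (1 - q e)) ≤ t ^ 2 / 9) :
    (8 : ℝ) / 9 ≤ ∑ ω ∈ Finset.univ.filter (fun ω => |D ω| ≤ t), bern q ω := by
  have hs := Finset.sum_filter_add_sum_filter_not Finset.univ (fun ω => |D ω| ≤ t) (bern q)
  rw [bern_total] at hs
  have hb : t ^ 2 * ∑ ω ∈ Finset.univ.filter (fun ω => ¬ |D ω| ≤ t), bern q ω ≤ t ^ 2 / 9 := by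
    refine le_trans ?_ hv
    rw [← bern_var, Finset.mul_sum]
    refine le_trans (Finset.sum_le_sum (g := fun ω => bern q ω * (D ω) ^ 2) ?_) ?_
    · intro ω hω
      have h2 : t < |D ω| := by simpa using hω
      have h3 : t ^ 2 ≤ (D ω) ^ 2 := by
        rw [← sq_abs (D ω)]
        gcongr
      rw [mul_comm]
      exact mul_le_mul_of_nonneg_left h3 (bern_nonneg q h0 h1 ω)
    · simp_rw [← hD]
      exact Finset.sum_le_sum_of_subset_of_nonneg (Finset.filter_subset _ _)
        fun ω _ _ => mul_nonneg (bern_nonneg q h0 h1 ω) (sq_nonneg _)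
  have : ∑ ω ∈ Finset.univ.filter (fun ω => ¬ |D ω| ≤ t), bern q ω ≤ 1 / 9 := by
    have : 0 < t ^ 2 := by positivity
    exact le_of_mul_le_mul_left (by linarith) this
  linarith

end Helpers

lemma cut_sum {n : ℕ} (S : Finset (Fin n)) (F : Fin n → Fin n → ℝ) (hF : ∀ u v, F u v = F v u) :
    ∑ p ∈ Finset.univ.filter (fun p : Fin n × Fin n => p.1 ∈ S ∧ p.2 ∉ S), F p.1 p.2
    = ∑ e ∈ Finset.univ.filter (fun e : {p : Fin n × Fin n // p.1 < p.2} =>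
        ¬ (e.1.1 ∈ S ↔ e.1.2 ∈ S)), F e.1.1 e.1.2 := by
  symm
  refine Finset.sum_bij (fun e _ => if e.1.1 ∈ S then e.1 else e.1.swap) ?_ ?_ ?_ ?_
  · rintro ⟨⟨u, v⟩, h⟩ he
    simp at he ⊢
    split_ifs <;> simp <;> tauto
  · rintro ⟨⟨u, v⟩, h⟩ he ⟨⟨u', v'⟩, h'⟩ he' hh
    simp at he he' hh h h' ⊢
    split_ifs at hh <;> simp at hh <;> grind
  · rintro ⟨u, v⟩ hp
    simp at hp
    have hne : u ≠ v := by rintro rfl; tauto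
    rcases lt_or_gt_of_ne hne with h | h
    · exact ⟨⟨(u, v), h⟩, by simp; tauto, by simp [hp.1]⟩
    · exact ⟨⟨(v, u), h⟩, by simp; tauto, by simp [hp.2]⟩
  · rintro ⟨⟨u, v⟩, h⟩ he
    simp only
    split_ifs
    · rfl
    · exact hF _ _

lemma keep_symm {n : ℕ} (ω : {p : Fin n × Fin n // p.1 < p.2} → Bool) (u v : Fin n) :
    keep ω u v = keep ω v u := by
  unfold keep
  rcases lt_trichotomy u v with h | h | h
  · simp [h, h.not_gt]
  · subst h; rfl
  · simp [h, h.not_gt]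

theorem stmt_4 (n : ℕ) (ε : ℝ) (w : Fin n → Fin n → ℝ)
    (hε : 0 < ε) (hε' : ε ≤ 1 / 30)
    (hsym : ∀ u v, w u v = w v u) (hnonneg : ∀ u v, 0 ≤ w u v)
    (hdiag : ∀ u, w u u = 0)
    (S : Finset (Fin n)) (hlo : 1 ≤ cutW w S) (hhi : cutW w S ≤ 4) :
    (8 : ℝ) / 9 ≤
      ∑ ω ∈ Finset.univ.filter
          (fun ω : {p : Fin n × Fin n // p.1 < p.2} → Bool =>
            |wTilde w ε ω S - cutW w S| ≤ 3 * ε * cutW w S),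
        sampleProb w ε ω := by
  have hkp : ∀ p : Fin n × Fin n, 0 ≤ keepProb w ε p := fun p =>
    le_min (div_nonneg (hnonneg _ _) (by positivity)) zero_le_one
  have hkp1 : ∀ p : Fin n × Fin n, keepProb w ε p ≤ 1 := fun p => min_le_right _ _
  have hkps : ∀ u v, keepProb w ε (u, v) = keepProb w ε (v, u) := by
    intro u v
    simp [keepProb, hsym u v]
  have hcut := cut_sum S w hsym
  have hW : 0 < cutW w S := by linarith
  have hcancel : ∀ p : Fin n × Fin n,
      w p.1 p.2 / keepProb w ε p * keepProb w ε p = w p.1 p.2 := by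
    intro p
    by_cases h : keepProb w ε p = 0
    · have : w p.1 p.2 = 0 := by
        unfold keepProb at h
        rcases min_choice (w p.1 p.2 / ε ^ 2) 1 with h2 | h2
        · rw [h2] at h
          rcases div_eq_zero_iff.1 h with h3 | h3
          · exact h3
          · exact absurd h3 (by positivity)
        · rw [h2] at h
          norm_num at h
      simp [this]
    · field_simp
  refine bern_cheb (fun e : {p : Fin n × Fin n // p.1 < p.2} => keepProb w ε e.1)
    (fun e => if ¬ (e.1.1 ∈ S ↔ e.1.2 ∈ S) then w e.1.1 e.1.2 / keepProb w ε e.1 else 0)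
    (fun e => hkp _) (fun e => hkp1 _) (3 * ε * cutW w S) (by positivity)
    (fun ω => wTilde w ε ω S - cutW w S) ?_ ?_
  · intro ω
    have h1 := cut_sum S (fun u v => if keep ω u v then w u v / keepProb w ε (u, v) else 0)
      (by intro u v; simp only [keep_symm ω u v, hsym u v, hkps u v])
    have h2 : wTilde w ε ω S = _ := h1
    have h3 : cutW w S = _ := hcut
    rw [h2, h3, ← Finset.sum_sub_distrib, Finset.sum_filter]
    refine Finset.sum_congr rfl fun e _ => ?_
    have hk : keep ω e.1.1 e.1.2 = ω e := by
      unfold keep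
      simp [e.2]
    have hc := hcancel e.1
    rw [hk]
    by_cases hb : (e.1.1 ∈ S ↔ e.1.2 ∈ S)
    · simp [hb]
    · rw [if_pos hb, if_pos hb, mul_sub, hc]
      simp
  · have hb : ∀ p : Fin n × Fin n, (w p.1 p.2 / keepProb w ε p) ^ 2 *
        (keepProb w ε p * (1 - keepProb w ε p)) ≤ ε ^ 2 * w p.1 p.2 := by
      intro p
      have hc := hcancel p
      have h0 := hkp p
      have h1 := hkp1 p
      have hw := hnonneg p.1 p.2
      have he : (w p.1 p.2 / keepProb w ε p) ^ 2 * (keepProb w ε p * (1 - keepProb w ε p))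
          = w p.1 p.2 * (w p.1 p.2 / keepProb w ε p * (1 - keepProb w ε p)) := by
        linear_combination (w p.1 p.2 / keepProb w ε p) * (1 - keepProb w ε p) * hc
      rw [he, mul_comm (ε ^ 2)]
      refine mul_le_mul_of_nonneg_left ?_ hw
      rcases le_total (w p.1 p.2 / ε ^ 2) 1 with h2 | h2
      · have h3 : keepProb w ε p = w p.1 p.2 / ε ^ 2 := min_eq_left h2
        have h4 : w p.1 p.2 / keepProb w ε p ≤ ε ^ 2 := by
          rw [h3]
          by_cases hz : w p.1 p.2 = 0
          · simp [hz]; positivity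
          · field_simp
            exact le_refl _
        have h5 : 0 ≤ w p.1 p.2 / keepProb w ε p := div_nonneg hw h0
        nlinarith
      · have h3 : keepProb w ε p = 1 := min_eq_right h2
        rw [h3]
        simp
        positivity
    have h3 : cutW w S = _ := hcut
    calc _ ≤ ∑ e : {p : Fin n × Fin n // p.1 < p.2},
          (if ¬ (e.1.1 ∈ S ↔ e.1.2 ∈ S) then ε ^ 2 * w e.1.1 e.1.2 else 0) := by
          refine Finset.sum_le_sum fun e _ => ?_
          by_cases hh : (e.1.1 ∈ S ↔ e.1.2 ∈ S)
          · simp [hh]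
          · simp only [if_pos hh]
            exact hb e.1
      _ = ε ^ 2 * cutW w S := by
          rw [h3, ← Finset.sum_filter, Finset.mul_sum]
      _ ≤ (3 * ε * cutW w S) ^ 2 / 9 := by
          have : 0 < ε ^ 2 := by positivity
          have h4 : cutW w S ≤ cutW w S ^ 2 := by nlinarith
          nlinarith [mul_le_mul_of_nonneg_left h4 this.le]
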